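/- Let L n denote the number of lambda terms of size n. For every n ≥ 1, as rational numbers, L n = ∑_{k=0}^{⌊(n−1)/2⌋} (−1)^k · (1/(n−k)) · choose(n−k, k) · choose(2n−3k, n−2k−1). -/

import Mathlib

/-- Lambda terms with de Bruijn indices. -/
inductive Term : Type
  | var : ℕ → Term
  | app : Term → Term → Term
  | abs : Term → Term

namespace Term

/-- Natural size: every operator (zero, successor, application, abstraction) has size 1. -/
def size : Term → ℕ
  | var k => k + 1
  | app M N => M.size + N.size + 1
  | abs M => M.size + 1

end Term

/-- `L n` is the number of lambda terms of size `n`. -/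
noncomputable def L (n : ℕ) : ℕ := Nat.card {t : Term // t.size = n}


def bb : ℕ → ℕ → ℚ
  | 0, _ => 0
  | p + 1, k => (-1 : ℚ) ^ k * (1 / ((p + 1 + k : ℕ) : ℚ)) * ((p + 1 + k).choose k : ℚ)
          * ((2 * (p + 1) + k).choose p : ℚ)

def hh (p k : ℕ) : ℚ := (-1 : ℚ) ^ k * catalan p * ((2 * p + k).choose k : ℚ)

lemma cast_catalan (p : ℕ) : (catalan p : ℚ) = (2 * p).factorial / (p.factorial * (p+1).factorial) := by
  have h := succ_mul_catalan_eq_centralBinom p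
  have h2 : ((p + 1 : ℚ)) * catalan p = ((p + p).choose p : ℚ) := by
    rw [← two_mul, ← Nat.centralBinom_eq_two_mul_choose, ← h]; push_cast; ring
  rw [Nat.cast_add_choose, ← two_mul] at h2
  have hp : (p.factorial : ℚ) ≠ 0 := by exact_mod_cast p.factorial_ne_zero
  rw [Nat.factorial_succ]
  push_cast
  have : (p + 1 : ℚ) ≠ 0 := by positivity
  field_simp at h2 ⊢
  linear_combination h2

lemma bb_hh_zero (p : ℕ) : bb (p+1) 0 = hh (p+1) 0 := by
  have e : 2 * (p + 1) = p + (p + 2) := by ring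
  simp only [bb, hh, cast_catalan, add_zero, Nat.choose_zero_right]
  rw [e, Nat.cast_add_choose]
  have hp : (p.factorial : ℚ) ≠ 0 := by exact_mod_cast p.factorial_ne_zero
  simp only [Nat.factorial_succ]
  push_cast
  field_simp

lemma bb_hh_left (j : ℕ) : bb 0 (j+1) - bb 1 j = hh 0 (j+1) := by
  simp [bb, hh]
  have : (1 + j : ℚ) ≠ 0 := by positivity
  rw [add_comm 1 j, Nat.choose_succ_self_right]
  push_cast
  field_simp
  ring

lemma bb_hh (q j : ℕ) : bb (q+1) (j+1) - bb (q+2) j = hh (q+1) (j+1) := by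
  simp only [bb, hh, cast_catalan]
  rw [show q + 1 + (j + 1) = (j + 1) + (q + 1) by ring, Nat.cast_add_choose,
    show 2 * (q + 1) + (j + 1) = q + (q + j + 3) by ring, Nat.cast_add_choose,
    show q + 1 + 1 + j = j + (q + 2) by ring, Nat.cast_add_choose,
    show 2 * (q + 1 + 1) + j = (q + 1) + (q + j + 3) by ring, Nat.cast_add_choose,
    show q + (q + j + 3) = (j + 1) + 2 * (q + 1) by ring, Nat.cast_add_choose,
    show (q + 1) + (q + j + 3) = 2 * q + j + 4 by ring,
    show (j + 1) + 2 * (q + 1) = 2 * q + j + 3 by ring,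
    show j + 1 + (q + 1) = q + j + 2 by ring,
    show j + (q + 2) = q + j + 2 by ring]
  have h1 : (q.factorial : ℚ) ≠ 0 := by exact_mod_cast q.factorial_ne_zero
  have h2 : (j.factorial : ℚ) ≠ 0 := by exact_mod_cast j.factorial_ne_zero
  have h3 : ((q+j).factorial : ℚ) ≠ 0 := by exact_mod_cast (q+j).factorial_ne_zero
  have h4 : ((2 * (q + 1)).factorial : ℚ) ≠ 0 := by exact_mod_cast (2 * (q + 1)).factorial_ne_zero
  simp only [show (2*q+j+4).factorial = (2*q+j+4) * (2*q+j+3).factorial from Nat.factorial_succ _,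
    show (q+j+3).factorial = (q+j+3) * (q+j+2).factorial from Nat.factorial_succ _,
    show (q+j+2).factorial = (q+j+2) * (q+j+1).factorial from Nat.factorial_succ _,
    show (q+j+1).factorial = (q+j+1) * (q+j).factorial from Nat.factorial_succ _,
    Nat.factorial_succ q, Nat.factorial_succ (q+1), Nat.factorial_succ j]
  push_cast
  rw [pow_succ]
  field_simp
  ring

noncomputable section
open Term

def termEquiv (n : ℕ) : {t : Term // t.size = n + 1} ≃
    Unit ⊕ {t : Term // t.size = n} ⊕
      (Σ p : Finset.HasAntidiagonal.antidiagonal n, {t : Term // t.size = p.1.1} × {t : Term // t.size = p.1.2}) where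
  toFun
    | ⟨.var _, _⟩ => .inl ()
    | ⟨.abs M, h⟩ => .inr (.inl ⟨M, by simpa [size] using h⟩)
    | ⟨.app M N, h⟩ => .inr (.inr ⟨⟨(M.size, N.size), by simpa [size] using h⟩, ⟨M, rfl⟩, ⟨N, rfl⟩⟩)
  invFun
    | .inl _ => ⟨.var n, rfl⟩
    | .inr (.inl M) => ⟨.abs M.1, by simp [size, M.2]⟩
    | .inr (.inr ⟨p, M, N⟩) => ⟨.app M.1 N.1, by
        have := p.2
        simp only [Finset.HasAntidiagonal.mem_antidiagonal] at this
        simp [size, M.2, N.2, this]⟩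
  left_inv := by
    rintro ⟨t, h⟩
    cases t with
    | var k => simp [size] at h; subst h; rfl
    | abs M => rfl
    | app M N => rfl
  right_inv := by
    rintro (_ | M | ⟨⟨⟨a, b⟩, h⟩, ⟨M, hM⟩, ⟨N, hN⟩⟩)
    · rfl
    · rfl
    · change M.size = a at hM
      change N.size = b at hN
      subst hM hN
      rfl

lemma size_pos (t : Term) : 0 < t.size := by cases t <;> simp [size]

lemma finite_terms (n : ℕ) : Finite {t : Term // t.size = n} := by
  induction n using Nat.strong_induction_on with
  | _ n ih =>
    cases n with
    | zero =>
      have : IsEmpty {t : Term // t.size = 0} := ⟨fun t => (size_pos t.1).ne' t.2⟩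
      infer_instance
    | succ n =>
      have := ih n (by omega)
      have (p : Finset.HasAntidiagonal.antidiagonal n) :
          Finite ({t : Term // t.size = p.1.1} × {t : Term // t.size = p.1.2}) := by
        have hp := Finset.HasAntidiagonal.mem_antidiagonal.1 p.2
        have := ih p.1.1 (by omega)
        have := ih p.1.2 (by omega)
        infer_instance
      exact Finite.of_equiv _ (termEquiv n).symm

lemma L_zero : L 0 = 0 := by
  have : IsEmpty {t : Term // t.size = 0} := ⟨fun t => (size_pos t.1).ne' t.2⟩
  simp [L]

lemma L_succ (n : ℕ) : L (n+1) = 1 + (L n + ∑ p ∈ Finset.HasAntidiagonal.antidiagonal n, L p.1 * L p.2) := by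
  have := finite_terms
  rw [L, Nat.card_congr (termEquiv n), Nat.card_sum, Nat.card_sum, Nat.card_sigma,
    ← Finset.sum_coe_sort (Finset.HasAntidiagonal.antidiagonal n)]
  simp [L, Nat.card_prod]

open PowerSeries in
lemma LS_eq : (1 - X) * (PowerSeries.mk fun n => (L n : ℚ)) =
    (1 - X) * X * ((PowerSeries.mk fun n => (L n : ℚ))^2 + (PowerSeries.mk fun n => (L n : ℚ))) + X := by
  have h : (PowerSeries.mk fun n => (L n : ℚ)) = X * ((PowerSeries.mk fun n => (L n : ℚ))^2 + (PowerSeries.mk fun n => (L n : ℚ)) + PowerSeries.mk 1) := by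
    ext n
    cases n with
    | zero => simp [L_zero]
    | succ n =>
      rw [coeff_succ_X_mul, sq]
      simp only [map_add, coeff_mul, coeff_mk, L_succ, Pi.one_apply]
      push_cast
      ring
  have h1 := PowerSeries.mk_one_mul_one_sub_eq_one ℚ
  linear_combination (1 - X) * h + X * h1


open PowerSeries

def VV (d : ℕ) : ℚ⟦X⟧ :=
  PowerSeries.mk fun n => if Even n then (-1 : ℚ) ^ (n / 2) * ((d + n / 2).choose d : ℚ) else 0

lemma VV_zero : (1 + X ^ 2) * VV 0 = 1 := by
  ext n
  rw [add_mul, one_mul, map_add, coeff_X_pow_mul']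
  match n with
  | 0 => simp [VV]
  | 1 => simp [VV, coeff_one]
  | n + 2 =>
    simp only [VV, coeff_mk, coeff_one, Nat.even_add, even_two, iff_true]
    by_cases h : Even n
    · simp [h, pow_succ]
    · simp [h]

lemma VV_succ (d : ℕ) : (1 + X ^ 2) * VV (d + 1) = VV d := by
  ext n
  rw [add_mul, one_mul, map_add, coeff_X_pow_mul']
  match n with
  | 0 => simp [VV]
  | 1 => simp [VV]
  | n + 2 =>
    simp only [VV, coeff_mk, Nat.even_add, even_two, iff_true]
    by_cases h : Even n
    · have e : (n + 2) / 2 = n / 2 + 1 := by omega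
      simp only [h, if_true, e, Nat.add_sub_cancel, show 2 ≤ n + 2 by omega]
      have := Nat.choose_succ_succ (d + (n / 2 + 1)) d
      rw [show d + 1 + (n / 2 + 1) = (d + (n / 2 + 1)) + 1 by ring, Nat.choose_succ_succ,
        show d + 1 + n / 2 = d + (n / 2 + 1) by ring]
      push_cast
      ring
    · simp [h]

lemma VV_mul (d : ℕ) : (1 + X ^ 2) ^ (d + 1) * VV d = 1 := by
  induction d with
  | zero => simpa using VV_zero
  | succ d ih => rw [pow_succ, mul_assoc, VV_succ, ih]

lemma VV_pow (d : ℕ) : VV 0 ^ (d + 1) = VV d := by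
  have h0 := congrArg (· ^ (d+1)) VV_zero
  simp only [mul_pow, one_pow] at h0
  have h1 := VV_mul d
  linear_combination (-VV 0 ^ (d + 1)) * h1 + VV d * h0

def xx : ℚ⟦X⟧ := X * VV 0 ^ 2

lemma xx_subst : HasSubst xx := HasSubst.of_constantCoeff_zero' (by simp [xx])

def Cs : ℚ⟦X⟧ := PowerSeries.mk fun n => (catalan n : ℚ)

lemma Cs_eq : Cs = 1 + X * Cs ^ 2 := by
  ext n
  cases n with
  | zero => simp [Cs]
  | succ n =>
    rw [map_add, coeff_succ_X_mul, sq, coeff_mul]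
    simp [Cs, catalan_succ', coeff_one]

def HH : ℚ⟦X⟧ := VV 0 * Cs.subst xx

lemma HH_eq : (1 + X ^ 2) * HH = 1 + X * HH ^ 2 := by
  have h : Cs.subst xx = 1 + xx * (Cs.subst xx) ^ 2 := by
    have := congrArg (substAlgHom (R := ℚ) xx_subst) Cs_eq
    simpa only [map_add, map_mul, map_pow, map_one, substAlgHom_X, coe_substAlgHom] using this
  rw [HH]
  rw [xx] at *
  linear_combination (Cs.subst (X * VV 0 ^ 2)) * VV_zero + h

lemma coeff_xx_pow (n d : ℕ) (h : n < d) : coeff n (xx ^ d) = 0 := by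
  rw [xx, mul_pow, coeff_X_pow_mul', if_neg (by omega)]

lemma coeff_HH (n : ℕ) : coeff n HH = ∑ d ∈ Finset.range (n + 1),
    (catalan d : ℚ) * coeff (n - d) (VV (2 * d)) := by
  have h1 : ∀ p ∈ Finset.HasAntidiagonal.antidiagonal n, coeff p.2 (Cs.subst xx) =
      ∑ d ∈ Finset.range (n + 1), (catalan d : ℚ) * coeff p.2 (xx ^ d) := by
    intro p hp
    have hp := Finset.HasAntidiagonal.mem_antidiagonal.1 hp
    rw [coeff_subst' xx_subst, finsum_eq_sum_of_support_subset (s := Finset.range (n + 1))]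
    · simp [Cs]
    · intro d hd
      by_contra hc
      simp only [Finset.coe_range, Set.mem_Iio] at hc
      exact hd (by simp only [coeff_xx_pow p.2 d (by omega), smul_zero])
  rw [HH, coeff_mul, Finset.sum_congr rfl (fun p hp => by rw [h1 p hp])]
  simp_rw [Finset.mul_sum]
  rw [Finset.sum_comm]
  refine Finset.sum_congr rfl fun d hd => ?_
  have hd := Finset.mem_range.1 hd
  have e : X ^ d * VV (2 * d) = VV 0 * xx ^ d := by
    rw [← VV_pow, xx]; ring
  have e2 := congrArg (coeff n) e
  rw [coeff_X_pow_mul', if_pos (by omega), coeff_mul] at e2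
  rw [e2, Finset.mul_sum]
  exact Finset.sum_congr rfl fun p _ => by ring

lemma coeff_HH' (n : ℕ) : coeff n HH = ∑ k ∈ Finset.range (n / 2 + 1), hh (n - 2 * k) k := by
  rw [coeff_HH]
  symm
  apply Finset.sum_of_injOn (fun k => n - 2 * k)
  · intro a ha b hb h
    simp at ha hb h
    omega
  · intro a ha
    simp at ha ⊢
  · intro d hd hn
    simp only [Finset.coe_range, Set.mem_image, Set.mem_Iio, not_exists, not_and,
      Finset.mem_range] at hd hn
    have : ¬ Even (n - d) := by
      rintro ⟨r, hr⟩
      exact hn r (by omega) (by omega)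
    simp [VV, this]
  · intro k hk
    simp only [Finset.mem_range] at hk
    have e : n - (n - 2 * k) = 2 * k := by omega
    simp only [e, VV, coeff_mk, hh, even_two_mul, if_true,
      Nat.mul_div_cancel_left k (show 0 < 2 by norm_num)]
    rw [Nat.choose_symm_add]
    try ring

lemma LS_HH : (1 - X) * (PowerSeries.mk fun n => (L n : ℚ)) + 1 = HH := by
  have h1 := LS_eq
  have h2 := HH_eq
  set P := (PowerSeries.mk fun n => (L n : ℚ))
  have h3 : ((1 - X) * P + 1 - HH) * (1 + X ^ 2 - X * ((1 - X) * P + 1 + HH)) = 0 := by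
    linear_combination (1 - X) * h1 - h2
  rcases mul_eq_zero.1 h3 with h | h
  · exact sub_eq_zero.1 h
  · have := congrArg constantCoeff h
    simp at this

lemma L_diff (n : ℕ) : (L (n + 1) : ℚ) - L n =
    ∑ k ∈ Finset.range ((n + 1) / 2 + 1), hh (n + 1 - 2 * k) k := by
  rw [← coeff_HH', ← LS_HH, sub_mul, one_mul, map_add, map_sub, coeff_succ_X_mul]
  simp [coeff_one]

def SS (n : ℕ) : ℚ := ∑ k ∈ Finset.range (n / 2 + 1), bb (n - 2 * k) k

lemma SS_diff (n : ℕ) : SS (n + 1) - SS n =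
    ∑ k ∈ Finset.range ((n + 1) / 2 + 1), hh (n + 1 - 2 * k) k := by
  have h1 : SS n = ∑ k ∈ Finset.range ((n + 1) / 2), bb (n - 2 * k) k := by
    rw [SS]
    rcases Nat.even_or_odd' n with ⟨m, rfl | rfl⟩
    · rw [show 2 * m / 2 = m by omega, show (2 * m + 1) / 2 = m by omega,
        Finset.sum_range_succ]
      simp [bb]
    · rw [show (2 * m + 1 + 1) / 2 = (2 * m + 1) / 2 + 1 by omega]
  rw [h1, SS, Finset.sum_range_succ', Finset.sum_range_succ' (fun k => hh (n + 1 - 2 * k) k),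
    add_sub_right_comm, ← Finset.sum_sub_distrib]
  congr 1
  · refine Finset.sum_congr rfl fun k hk => ?_
    have hk := Finset.mem_range.1 hk
    obtain ⟨p, hp⟩ : ∃ p, n = 2 * k + 1 + p := ⟨n - (2 * k + 1), by omega⟩
    rw [show n + 1 - 2 * (k + 1) = p by omega, show n - 2 * k = p + 1 by omega]
    cases p with
    | zero => exact bb_hh_left k
    | succ p => exact bb_hh p k
  · exact bb_hh_zero n

lemma L_eq_SS (n : ℕ) : (L n : ℚ) = SS n := by
  induction n with
  | zero => simp [L_zero, SS, bb]
  | succ n ih => linear_combination L_diff n - SS_diff n + ih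

end

theorem L_closed_formula :
    ∀ n : ℕ, 1 ≤ n →
      (L n : ℚ) = ∑ k ∈ Finset.range ((n - 1) / 2 + 1),
        (-1 : ℚ) ^ k * (1 / ((n - k : ℕ) : ℚ)) * ((n - k).choose k : ℚ)
          * ((2 * n - 3 * k).choose (n - 2 * k - 1) : ℚ) := by
  intro n hn
  have h1 : SS n = ∑ k ∈ Finset.range ((n - 1) / 2 + 1), bb (n - 2 * k) k := by
    rw [SS]
    rcases Nat.even_or_odd' n with ⟨m, rfl | rfl⟩
    · rw [Finset.sum_range_succ, show (2 * m - 1) / 2 + 1 = 2 * m / 2 by omega]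
      simp [bb]
    · rw [show (2 * m + 1 - 1) / 2 = (2 * m + 1) / 2 by omega]
  rw [L_eq_SS, h1]
  refine Finset.sum_congr rfl fun k hk => ?_
  have hk := Finset.mem_range.1 hk
  obtain ⟨p, rfl⟩ : ∃ p, n = 2 * k + 1 + p := ⟨n - (2 * k + 1), by omega⟩
  rw [show 2 * k + 1 + p - 2 * k = p + 1 by omega, bb,
    show 2 * k + 1 + p - k = p + 1 + k by omega,
    show 2 * (2 * k + 1 + p) - 3 * k = 2 * (p + 1) + k by omega,
    show p + 1 - 1 = p by omega]
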